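/- For α, β ∈ ASP, if χ_α ≤ χ_β and either Inv(α) ⊆ Inv(β) or Inv(α⁻¹) ⊆ Inv(β⁻¹), then α ≤ β in Bruhat order. -/

import Mathlib

/-!
Write `A = {n ≥ b : α n < a}` and `B = {m < b : a ≤ α m}`, so `#A = s_α(a,b)` and
`#B = s_{α⁻¹}(b,a)`. Moving `a` or `b` by one step shows
`s_α(a,b) - s_{α⁻¹}(b,a) = χ_α + a - b` (`sF_sub_sF_inv`). Since `χ_α ≤ χ_β`, it therefore suffices
to prove either `s_α(a,b) ≤ s_β(a,b)` or `s_{α⁻¹}(b,a) ≤ s_{β⁻¹}(b,a)`.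

Every `(m, n) ∈ B × A` is an inversion of `α`. If `Inv α ⊆ Inv β`, then `β n < β m` for all such
pairs: either `β` maps all of `A` below `a`, which gives the first inequality, or `β` maps some
element of `A`, hence all of `B`, to values at least `a`, which gives the second. If
`Inv α⁻¹ ⊆ Inv β⁻¹`, the same dichotomy applies to the positions in `β` of the values `α(A)` and
`α(B)`, compared with `b`.
-/

/-- A permutation of ℤ is almost-sign-preserving if only finitely many `n` have
exactly one of `n`, `α n` negative. -/
def ASP (α : Equiv.Perm ℤ) : Prop := {n : ℤ | Xor' (n < 0) (α n < 0)}.Finite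

/-- The slipface function `s_α(a,b) = #{n ≥ b : α n < a}`. -/
noncomputable def sF (α : Equiv.Perm ℤ) : ℤ → ℤ → ℕ :=
  fun a b => {n : ℤ | b ≤ n ∧ α n < a}.ncard

/-- The shift `χ_α = s_α(0,0) - s_{α⁻¹}(0,0)`. -/
noncomputable def shiftASP (α : Equiv.Perm ℤ) : ℤ :=
  (sF α 0 0 : ℤ) - (sF α⁻¹ 0 0 : ℤ)

/-- Bruhat order on ASP: pointwise comparison of slipface functions. -/
def BruhatLE (α β : Equiv.Perm ℤ) : Prop := ∀ a b : ℤ, sF α a b ≤ sF β a b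

/-- `α ≤_χ β`: Bruhat order together with equality of shifts. -/
def BruhatLEchi (α β : Equiv.Perm ℤ) : Prop := BruhatLE α β ∧ shiftASP α = shiftASP β

/-- `γ` is the Demazure product `α ⋆ β`:
`s_γ(a,b) = min_{ℓ} [s_α(a,ℓ) + s_β(ℓ,b)]`. -/
def IsDem (α β γ : Equiv.Perm ℤ) : Prop :=
  ∀ a b : ℤ, IsLeast {x : ℕ | ∃ ℓ : ℤ, x = sF α a ℓ + sF β ℓ b} (sF γ a b)

/-- `γ = α ◁ β`: `s_γ(a,b) = max_ℓ [s_α(a,ℓ) - s_{β⁻¹}(b,ℓ)]`. -/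
def IsTriL (α β γ : Equiv.Perm ℤ) : Prop :=
  ∀ a b : ℤ, IsGreatest {x : ℤ | ∃ ℓ : ℤ, x = (sF α a ℓ : ℤ) - (sF β⁻¹ b ℓ : ℤ)}
    ((sF γ a b : ℤ))

/-- `γ = α ▷ β`: `s_γ(a,b) = max_ℓ [s_β(ℓ,b) - s_{α⁻¹}(ℓ,a)]`. -/
def IsTriR (α β γ : Equiv.Perm ℤ) : Prop :=
  ∀ a b : ℤ, IsGreatest {x : ℤ | ∃ ℓ : ℤ, x = (sF β ℓ b : ℤ) - (sF α⁻¹ ℓ a : ℤ)}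
    ((sF γ a b : ℤ))

/-- The set of inversions of a permutation. -/
def InvSet (α : Equiv.Perm ℤ) : Set (ℤ × ℤ) := {p : ℤ × ℤ | p.1 < p.2 ∧ α p.2 < α p.1}

theorem ASP.inv {α : Equiv.Perm ℤ} (h : ASP α) : ASP α⁻¹ := by
  refine (Set.Finite.image α h).subset ?_
  intro n hn
  refine ⟨α⁻¹ n, Or.symm ?_, by simp⟩
  rw [show α (α⁻¹ n) = n by simp]
  exact hn

theorem ASP.finite {α : Equiv.Perm ℤ} (h : ASP α) (a b : ℤ) :
    {n : ℤ | b ≤ n ∧ α n < a}.Finite := by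
  refine ((h.union (Set.finite_Ico b 0)).union
    ((Set.finite_Ico 0 a).image (α⁻¹ : Equiv.Perm ℤ))).subset ?_
  rintro n ⟨h1, h2⟩
  by_cases hn : n < 0
  · exact Or.inl (Or.inr ⟨h1, hn⟩)
  by_cases ha : α n < 0
  · exact Or.inl (Or.inl (Or.inr ⟨ha, hn⟩))
  · exact Or.inr ⟨α n, ⟨not_lt.mp ha, h2⟩, by simp⟩

theorem sF_add_one_left {α : Equiv.Perm ℤ} (h : ASP α) (a b : ℤ) :
    sF α (a + 1) b = sF α a b + if b ≤ α⁻¹ a then 1 else 0 := by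
  unfold sF
  split_ifs with hc
  · rw [← Set.ncard_insert_of_notMem (a := α⁻¹ a) (by simp) (h.finite a b)]
    congr 1
    ext n
    simp only [Set.mem_ofPred_eq, Set.mem_insert_iff, Equiv.Perm.eq_inv_iff_eq]
    constructor
    · rintro ⟨h1, h2⟩
      omega
    · rintro (h1 | h1)
      · have : n = α⁻¹ a := by simp [← h1]
        omega
      · omega
  · rw [add_zero]
    congr 1
    ext n
    simp only [Set.mem_ofPred_eq]
    constructor
    · rintro ⟨h1, h2⟩
      refine ⟨h1, lt_of_le_of_ne (by omega) ?_⟩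
      rintro rfl
      simp at hc
      omega
    · omega

theorem sF_eq_add_one_right {α : Equiv.Perm ℤ} (h : ASP α) (a b : ℤ) :
    sF α a b = sF α a (b + 1) + if α b < a then 1 else 0 := by
  unfold sF
  split_ifs with hc
  · rw [← Set.ncard_insert_of_notMem (a := b) (by simp) (h.finite a (b + 1))]
    congr 1
    ext n
    simp only [Set.mem_ofPred_eq, Set.mem_insert_iff]
    constructor
    · omega
    · rintro (rfl | h1)
      · exact ⟨le_rfl, hc⟩
      · omega
  · rw [add_zero]
    congr 1
    ext n
    simp only [Set.mem_ofPred_eq]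
    constructor
    · rintro ⟨h1, h2⟩
      refine ⟨?_, h2⟩
      by_contra h3
      obtain rfl : n = b := by omega
      exact hc h2
    · omega

/-- Replacing `a` by `a + 1` adds the position `α⁻¹ a` to the first set if it is at least `b`,
and removes the value `a` from the second otherwise. -/
theorem sF_sub_step {α : Equiv.Perm ℤ} (h : ASP α) (a b : ℤ) :
    (sF α (a + 1) b : ℤ) - sF α⁻¹ b (a + 1) = sF α a b - sF α⁻¹ b a + 1 := by
  have h1 := sF_add_one_left h a b
  have h2 := sF_eq_add_one_right h.inv b a
  split_ifs at h1 h2 <;> omega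

theorem sF_sub_left {α : Equiv.Perm ℤ} (h : ASP α) (a b : ℤ) :
    (sF α a b : ℤ) - sF α⁻¹ b a = sF α 0 b - sF α⁻¹ b 0 + a := by
  induction a with
  | zero => simp
  | succ i ih => rw [sF_sub_step h, ih]; ring
  | pred i ih =>
    have := sF_sub_step h (-(i : ℤ) - 1) b
    rw [sub_add_cancel] at this
    linarith

theorem sF_sub_sF_inv {α : Equiv.Perm ℤ} (h : ASP α) (a b : ℤ) :
    (sF α a b : ℤ) - sF α⁻¹ b a = shiftASP α + a - b := by
  have h1 := sF_sub_left h a b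
  have h2 := sF_sub_left h.inv b 0
  rw [inv_inv] at h2
  unfold shiftASP
  linarith

/-- The complementary count `s_{α⁻¹}(b,a)` in terms of positions of `α` rather than values. -/
theorem sF_inv_eq (α : Equiv.Perm ℤ) (a b : ℤ) :
    sF α⁻¹ b a = {m : ℤ | m < b ∧ a ≤ α m}.ncard := by
  unfold sF
  rw [← Set.ncard_image_of_injective {m : ℤ | m < b ∧ a ≤ α m} α.injective]
  congr 1
  ext n
  constructor
  · rintro ⟨h1, h2⟩
    exact ⟨α⁻¹ n, ⟨h2, by simpa using h1⟩, by simp⟩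
  · rintro ⟨m, ⟨h1, h2⟩, rfl⟩
    exact ⟨h2, by simpa using h1⟩

theorem ASP.finite_compl {α : Equiv.Perm ℤ} (h : ASP α) (a b : ℤ) :
    {m : ℤ | m < b ∧ a ≤ α m}.Finite := by
  refine ((h.inv.finite b a).image (α⁻¹ : Equiv.Perm ℤ)).subset ?_
  rintro m ⟨h1, h2⟩
  exact ⟨α m, ⟨h2, by simpa using h1⟩, by simp⟩

theorem sF_le_or_of_InvSet {α β : Equiv.Perm ℤ} (hβ : ASP β)
    (h : InvSet α ⊆ InvSet β) (a b : ℤ) :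
    sF α a b ≤ sF β a b ∨ sF α⁻¹ b a ≤ sF β⁻¹ b a := by
  by_cases hA : ∀ n, b ≤ n → α n < a → β n < a
  · exact Or.inl (Set.ncard_le_ncard (fun n hn => ⟨hn.1, hA n hn.1 hn.2⟩) (hβ.finite a b))
  · push Not at hA
    obtain ⟨n, h1, h2, h3⟩ := hA
    right
    rw [sF_inv_eq, sF_inv_eq]
    refine Set.ncard_le_ncard ?_ (hβ.finite_compl a b)
    rintro m ⟨h4, h5⟩
    have h6 : (m, n) ∈ InvSet β := h ⟨by dsimp only; omega, by dsimp only; omega⟩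
    exact ⟨h4, h3.trans h6.2.le⟩

/-- Inverting exchanges the two counts, so the hypothesis on `Inv α⁻¹` yields the same
dichotomy. -/
theorem sF_le_or_of_InvSet_inv {α β : Equiv.Perm ℤ} (hβ : ASP β)
    (h : InvSet α⁻¹ ⊆ InvSet β⁻¹) (a b : ℤ) :
    sF α a b ≤ sF β a b ∨ sF α⁻¹ b a ≤ sF β⁻¹ b a := by
  have := sF_le_or_of_InvSet hβ.inv h b a
  rw [inv_inv, inv_inv] at this
  exact this.symm

/-- If `χ_α ≤ χ_β` and either `α ≤_L β` or `α ≤_R β`, then `α ≤ β` in Bruhat order. -/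
theorem weak_implies_bruhat (α β : Equiv.Perm ℤ) (hα : ASP α) (hβ : ASP β)
    (hχ : shiftASP α ≤ shiftASP β)
    (h : InvSet α ⊆ InvSet β ∨ InvSet α⁻¹ ⊆ InvSet β⁻¹) :
    BruhatLE α β := by
  intro a b
  have h1 := sF_sub_sF_inv hα a b
  have h2 := sF_sub_sF_inv hβ a b
  have h3 : sF α a b ≤ sF β a b ∨ sF α⁻¹ b a ≤ sF β⁻¹ b a :=
    h.elim (fun h => sF_le_or_of_InvSet hβ h a b) (fun h => sF_le_or_of_InvSet_inv hβ h a b)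
  omega
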